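/- arXiv:2512.20386 — 2 statements merged into one kernel-verified Lean document; each statement's English description precedes it below -/
import Mathlib

section
/- Let A be a symmetric positive definite 2×2 real matrix and let G_A(ξ, η) = (1/(2π√(det A))) · log √((ξ−η)ᵀ A⁻¹ (ξ−η)). Then for every fixed η ∈ ℝ², the function ξ ↦ G_A(ξ, η) satisfies the anisotropic Laplacian equation div(A ∇_ξ G_A(ξ, η)) = 0 at every point ξ ∈ ℝ² with ξ ≠ η. -/
open Matrix Real MeasureTheory

/-- The divergence of a vector field on `ℝᵈ`: the trace of its Fréchet derivative. -/
noncomputable def adiv {d : ℕ} (F : EuclideanSpace ℝ (Fin d) → EuclideanSpace ℝ (Fin d))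
    (x : EuclideanSpace ℝ (Fin d)) : ℝ :=
  LinearMap.trace ℝ (EuclideanSpace ℝ (Fin d)) (fderiv ℝ F x).toLinearMap

/-- The quadratic form `xᵀ M x` associated to a `d × d` matrix. -/
noncomputable def quadForm {d : ℕ} (M : Matrix (Fin d) (Fin d) ℝ)
    (x : EuclideanSpace ℝ (Fin d)) : ℝ :=
  ∑ i, ∑ j, x i * M i j * x j

/-- Matrix-vector multiplication, acting on Euclidean space. -/
noncomputable def matVec {d : ℕ} (M : Matrix (Fin d) (Fin d) ℝ)
    (x : EuclideanSpace ℝ (Fin d)) : EuclideanSpace ℝ (Fin d) :=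
  Matrix.toEuclideanLin M x

/-!
Where `q x = xᵀ A⁻¹ x` is positive, the gradient of `c log √q` is `(c / q x) A⁻¹ x`, so
`A` turns it into the multiple `(c / q x) x` of the position vector. Since `c / q` is homogeneous
of degree `-2`, the divergence of that field in dimension `d` is `(d - 2) c / q x`, which vanishes
for `d = 2`.
-/

section Gradient

variable {E : Type*} [NormedAddCommGroup E] [InnerProductSpace ℝ E] [CompleteSpace E]

theorem hasGradientAt_comp_of_hasDerivAt {φ : ℝ → ℝ} {φ' : ℝ} {f : E → ℝ} {f' x : E}
    (hφ : HasDerivAt φ φ' (f x)) (hf : HasGradientAt f f' x) :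
    HasGradientAt (fun y => φ (f y)) (φ' • f') x := by
  rw [hasGradientAt_iff_hasFDerivAt, map_smul]
  exact hφ.comp_hasFDerivAt x hf.hasFDerivAt

theorem gradient_comp_sub (f : E → ℝ) (a x : E) :
    gradient (fun y => f (y - a)) x = gradient f (x - a) := by
  rw [gradient, gradient, fderiv_comp_sub]

end Gradient

theorem hasDerivAt_log_sqrt {t : ℝ} (ht : 0 < t) :
    HasDerivAt (fun s => log √s) (1 / (2 * t)) t := by
  convert (hasDerivAt_sqrt ht.ne').log (sqrt_ne_zero'.2 ht) using 1
  rw [div_div, mul_assoc, mul_self_sqrt ht.le]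

variable {d : ℕ}

theorem adiv_comp_sub (F : EuclideanSpace ℝ (Fin d) → EuclideanSpace ℝ (Fin d))
    (a x : EuclideanSpace ℝ (Fin d)) :
    adiv (fun y => F (y - a)) x = adiv F (x - a) := by
  rw [adiv, adiv, fderiv_comp_sub]

theorem adiv_congr_of_eventuallyEq {F G : EuclideanSpace ℝ (Fin d) → EuclideanSpace ℝ (Fin d)}
    {x : EuclideanSpace ℝ (Fin d)} (h : F =ᶠ[nhds x] G) : adiv F x = adiv G x := by
  rw [adiv, adiv, h.fderiv_eq]

theorem adiv_smul {g : EuclideanSpace ℝ (Fin d) → ℝ} {g' x : EuclideanSpace ℝ (Fin d)}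
    {F : EuclideanSpace ℝ (Fin d) → EuclideanSpace ℝ (Fin d)}
    (hg : HasGradientAt g g' x) (hF : DifferentiableAt ℝ F x) :
    adiv (fun y => g y • F y) x = g x * adiv F x + inner ℝ g' (F x) := by
  have hfderiv : HasFDerivAt (fun y => g y • F y) _ x := hg.hasFDerivAt.smul hF.hasFDerivAt
  rw [adiv, hfderiv.fderiv]
  simp [adiv, LinearMap.trace_smulRight]

theorem adiv_id (x : EuclideanSpace ℝ (Fin d)) : adiv (fun y => y) x = d := by
  simp [adiv]

section QuadForm

variable {M A : Matrix (Fin d) (Fin d) ℝ}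

theorem quadForm_eq_dotProduct_mulVec (M : Matrix (Fin d) (Fin d) ℝ)
    (x : EuclideanSpace ℝ (Fin d)) : quadForm M x = x.ofLp ⬝ᵥ M *ᵥ x.ofLp := by
  simp only [quadForm, dotProduct, mulVec, Finset.mul_sum, mul_assoc]

theorem inner_matVec_self (M : Matrix (Fin d) (Fin d) ℝ) (x : EuclideanSpace ℝ (Fin d)) :
    inner ℝ (matVec M x) x = quadForm M x := by
  rw [quadForm_eq_dotProduct_mulVec, EuclideanSpace.inner_eq_star_dotProduct]
  simp [matVec]

theorem quadForm_pos (hM : M.PosDef) {x : EuclideanSpace ℝ (Fin d)} (hx : x ≠ 0) :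
    0 < quadForm M x := by
  rw [quadForm_eq_dotProduct_mulVec]
  simpa using hM.dotProduct_mulVec_pos (x := x.ofLp) (by simpa using hx)

theorem matVec_smul (M : Matrix (Fin d) (Fin d) ℝ) (a : ℝ) (x : EuclideanSpace ℝ (Fin d)) :
    matVec M (a • x) = a • matVec M x :=
  map_smul _ a x

theorem matVec_matVec_inv (hA : IsUnit A.det) (x : EuclideanSpace ℝ (Fin d)) :
    matVec A (matVec A⁻¹ x) = x := by
  rw [matVec, matVec, ← LinearMap.comp_apply, ← toLpLin_mul_same, mul_nonsing_inv A hA,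
    toLpLin_one, LinearMap.id_apply]

theorem hasGradientAt_quadForm (hM : M.IsSymm) (x : EuclideanSpace ℝ (Fin d)) :
    HasGradientAt (quadForm M) ((2 : ℝ) • matVec M x) x := by
  have hsymm : (toEuclideanLin M).toContinuousLinearMap.IsSymmetric :=
    isSymmetric_toEuclideanLin_iff.2 (isHermitian_iff_isSymm.2 hM)
  have hquad : quadForm M = (toEuclideanLin M).toContinuousLinearMap.reApplyInnerSelf :=
    funext fun y => (inner_matVec_self M y).symm
  rw [hquad, hasGradientAt_iff_hasFDerivAt, map_smul, ofNat_smul_eq_nsmul]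
  exact (hsymm.hasStrictFDerivAt_reApplyInnerSelf x).hasFDerivAt

theorem hasGradientAt_const_mul_log_sqrt_quadForm (hM : M.IsSymm) (c : ℝ)
    {x : EuclideanSpace ℝ (Fin d)} (hx : 0 < quadForm M x) :
    HasGradientAt (fun y => c * log √(quadForm M y)) ((c / quadForm M x) • matVec M x) x := by
  convert hasGradientAt_comp_of_hasDerivAt ((hasDerivAt_log_sqrt hx).const_mul c)
    (hasGradientAt_quadForm hM x) using 1
  rw [smul_smul]
  congr 1
  field_simp

theorem hasGradientAt_div_quadForm (hM : M.IsSymm) (c : ℝ) {x : EuclideanSpace ℝ (Fin d)}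
    (hx : quadForm M x ≠ 0) :
    HasGradientAt (fun y => c / quadForm M y) (-(2 * c / quadForm M x ^ 2) • matVec M x) x := by
  simp only [div_eq_mul_inv c]
  convert hasGradientAt_comp_of_hasDerivAt ((hasDerivAt_inv hx).const_mul c)
    (hasGradientAt_quadForm hM x) using 1
  rw [smul_smul]
  congr 1
  ring

theorem adiv_div_quadForm_smul_id (hM : M.IsSymm) (c : ℝ) {x : EuclideanSpace ℝ (Fin d)}
    (hx : quadForm M x ≠ 0) :
    adiv (fun y => (c / quadForm M y) • y) x = (d - 2) * c / quadForm M x := by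
  rw [adiv_smul (hasGradientAt_div_quadForm hM c hx) differentiableAt_fun_id, adiv_id,
    real_inner_smul_left, inner_matVec_self]
  field_simp
  ring

theorem matVec_gradient_log_sqrt_quadForm_inv (hsymm : A.IsSymm) (hdet : IsUnit A.det) (c : ℝ)
    {x : EuclideanSpace ℝ (Fin d)} (hx : 0 < quadForm A⁻¹ x) :
    matVec A (gradient (fun y => c * log √(quadForm A⁻¹ y)) x) = (c / quadForm A⁻¹ x) • x := by
  rw [(hasGradientAt_const_mul_log_sqrt_quadForm hsymm.inv c hx).gradient, matVec_smul,
    matVec_matVec_inv hdet]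

theorem adiv_matVec_gradient_log_sqrt_quadForm_inv (hsymm : A.IsSymm) (hdet : IsUnit A.det)
    (c : ℝ) {x : EuclideanSpace ℝ (Fin d)} (hx : 0 < quadForm A⁻¹ x) :
    adiv (fun y => matVec A (gradient (fun z => c * log √(quadForm A⁻¹ z)) y)) x =
      (d - 2) * c / quadForm A⁻¹ x := by
  have hcont : ContinuousAt (quadForm A⁻¹) x :=
    (hasGradientAt_quadForm hsymm.inv x).continuousAt
  have hradial : (fun y => matVec A (gradient (fun z => c * log √(quadForm A⁻¹ z)) y))
      =ᶠ[nhds x] fun y => (c / quadForm A⁻¹ y) • y := by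
    filter_upwards [hcont.eventually_const_lt hx] with y hy
    exact matVec_gradient_log_sqrt_quadForm_inv hsymm hdet c hy
  rw [adiv_congr_of_eventuallyEq hradial, adiv_div_quadForm_smul_id hsymm.inv c hx.ne']

end QuadForm

theorem anisotropic_fundamental_solution_harmonic_2d_general
    {A : Matrix (Fin d) (Fin d) ℝ} (hsymm : A.IsSymm) (hdet : IsUnit A.det) (c : ℝ)
    {η ξ : EuclideanSpace ℝ (Fin d)} (hξ : 0 < quadForm A⁻¹ (ξ - η)) :
    adiv (fun ζ => matVec A (gradient (fun ζ' => c * log √(quadForm A⁻¹ (ζ' - η))) ζ)) ξ =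
      (d - 2) * c / quadForm A⁻¹ (ξ - η) := by
  rw [← adiv_matVec_gradient_log_sqrt_quadForm_inv hsymm hdet c hξ, ← adiv_comp_sub]
  simp only [gradient_comp_sub fun z => c * log √(quadForm A⁻¹ z)]

/-- For a symmetric positive definite `2 × 2` matrix `A` and fixed `η ∈ ℝ²`, the
function `ξ ↦ G_A(ξ, η) = (1/(2π√(det A))) log √((ξ−η)ᵀ A⁻¹ (ξ−η))` satisfies the anisotropic
Laplacian equation `div(A ∇_ξ G_A(ξ, η)) = 0` at every `ξ ≠ η`. -/
theorem anisotropic_fundamental_solution_harmonic_2d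
    (A : Matrix (Fin 2) (Fin 2) ℝ) (hA : A.PosDef) (hAsymm : A.IsSymm)
    (η : EuclideanSpace ℝ (Fin 2)) :
    ∀ ξ : EuclideanSpace ℝ (Fin 2), ξ ≠ η →
      adiv (fun ζ => matVec A (gradient
        (fun ζ' => (1 / (2 * π * Real.sqrt A.det)) *
          Real.log (Real.sqrt (quadForm A⁻¹ (ζ' - η)))) ζ)) ξ = 0 := by
  intro ξ hξ
  have hpos : 0 < quadForm A⁻¹ (ξ - η) := quadForm_pos hA.inv (sub_ne_zero.2 hξ)
  simp [anisotropic_fundamental_solution_harmonic_2d_general hAsymm hA.det_pos.ne'.isUnit _ hpos]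
end

section
/- Let A be a symmetric positive definite 2×2 real matrix with symmetric positive definite square root A^{1/2} and inverse square root A^{-1/2}. Let v ≠ w be points of ℝ², let γ(t) = v + t(w−v), let n be the unit vector obtained by rotating (w−v)/‖w−v‖ clockwise by 90 degrees, and let η ∈ ℝ² with η ∉ {γ(t) : t ∈ [0,1]}. Then (‖w−v‖ / √(det A)) · ∫₀¹ log √((γ(t)−η)ᵀ A⁻¹ (γ(t)−η)) dt = (‖A^{-1/2}(w−v)‖ / √(nᵀ A n)) · ∫₀¹ log ‖A^{-1/2}(γ(t)−η)‖ dt; that is, the anisotropic Neumann boundary integral over the segment equals 1/√(nᵀAn) times the corresponding isotropic integral over the A^{-1/2}-transformed segment. -/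
open Matrix Real MeasureTheory

/-- Rotation of a vector in `ℝ²` clockwise by 90 degrees: `(x₁, x₂) ↦ (x₂, −x₁)`. -/
noncomputable def rotCW (x : EuclideanSpace ℝ (Fin 2)) : EuclideanSpace ℝ (Fin 2) :=
  (EuclideanSpace.equiv (Fin 2) ℝ).symm ![x 1, -x 0]

/-!
Since `A⁻¹ = (B⁻¹)ᵀ B⁻¹` whenever `A = B Bᵀ`, the two logarithmic integrands agree pointwise:
`‖B⁻¹ x‖ = √(xᵀ A⁻¹ x)`. It remains to compare the prefactors. In the plane, rotating by a right
angle turns the form of `A` into the form of its adjugate, so `nᵀ A n = det A · uᵀ A⁻¹ u / ‖u‖²`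
for the unit normal `n` to `u = w - v`, that is, `√(nᵀ A n) = √(det A) · ‖B⁻¹ u‖ / ‖u‖`.
-/

section Dimension

variable {d : ℕ} (M : Matrix (Fin d) (Fin d) ℝ) (x : EuclideanSpace ℝ (Fin d))

theorem quadForm_eq_dotProduct : quadForm M x = x.ofLp ⬝ᵥ M *ᵥ x.ofLp := by
  simp only [quadForm, dotProduct, mulVec, Finset.mul_sum, mul_assoc]

theorem quadForm_smul_left (c : ℝ) : quadForm (c • M) x = c * quadForm M x := by
  simp only [quadForm_eq_dotProduct, smul_mulVec, dotProduct_smul, smul_eq_mul]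

theorem quadForm_smul_right (c : ℝ) : quadForm M (c • x) = c ^ 2 * quadForm M x := by
  simp only [quadForm_eq_dotProduct, WithLp.ofLp_smul, mulVec_smul, dotProduct_smul,
    smul_dotProduct, smul_eq_mul]
  ring

theorem quadForm_transpose_mul_self : quadForm (Mᵀ * M) x = ‖matVec M x‖ ^ 2 := by
  rw [quadForm_eq_dotProduct, ← mulVec_mulVec, dotProduct_mulVec, vecMul_transpose,
    EuclideanSpace.real_norm_sq_eq]
  simp only [matVec, toLpLin_apply, dotProduct, sq]

theorem norm_matVec_inv : ‖matVec M⁻¹ x‖ = √(quadForm (M * Mᵀ)⁻¹ x) := by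
  rw [Matrix.mul_inv_rev, ← transpose_nonsing_inv, quadForm_transpose_mul_self,
    Real.sqrt_sq (norm_nonneg _)]

variable {M x}

theorem quadForm_adjugate (hM : IsUnit M.det) :
    quadForm M.adjugate x = M.det * quadForm M⁻¹ x := by
  rw [inv_def, quadForm_smul_left, ← mul_assoc, Ring.mul_inverse_cancel _ hM, one_mul]

theorem matVec_ne_zero (hM : IsUnit M.det) (hx : x ≠ 0) : matVec M x ≠ 0 := by
  intro h
  have mulVec_eq_zero : M *ᵥ x.ofLp = 0 := congrArg WithLp.ofLp h
  exact hx (WithLp.ofLp_injective 2 (eq_zero_of_mulVec_eq_zero hM.ne_zero mulVec_eq_zero))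

end Dimension

section Plane

variable {A B : Matrix (Fin 2) (Fin 2) ℝ}

theorem quadForm_rotCW (A : Matrix (Fin 2) (Fin 2) ℝ) (x : EuclideanSpace ℝ (Fin 2)) :
    quadForm A (rotCW x) = quadForm A.adjugate x := by
  simp only [quadForm, rotCW, PiLp.continuousLinearEquiv_symm_apply, Fin.sum_univ_two,
    adjugate_fin_two, of_apply, cons_val_zero, cons_val_one, cons_val', cons_val_fin_one]
  ring

theorem rotCW_smul (c : ℝ) (x : EuclideanSpace ℝ (Fin 2)) : rotCW (c • x) = c • rotCW x := by
  ext i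
  fin_cases i <;> simp [rotCW]

theorem sqrt_quadForm_rotCW_normalize (hA : 0 < A.det) (x : EuclideanSpace ℝ (Fin 2)) :
    √(quadForm A (rotCW (‖x‖⁻¹ • x))) = ‖x‖⁻¹ * (√A.det * √(quadForm A⁻¹ x)) := by
  rw [rotCW_smul, quadForm_smul_right, quadForm_rotCW, quadForm_adjugate hA.ne'.isUnit,
    Real.sqrt_mul (sq_nonneg _), Real.sqrt_sq (inv_nonneg.mpr (norm_nonneg x)),
    Real.sqrt_mul hA.le]

theorem norm_matVec_inv_div_sqrt_quadForm_rotCW (hB : IsUnit B.det) (hBA : B * Bᵀ = A)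
    {x : EuclideanSpace ℝ (Fin 2)} (hx : x ≠ 0) :
    ‖matVec B⁻¹ x‖ / √(quadForm A (rotCW (‖x‖⁻¹ • x))) = ‖x‖ / √A.det := by
  have det_pos : 0 < A.det := by
    rw [← hBA, det_mul, det_transpose]
    exact mul_self_pos.mpr hB.ne_zero
  have norm_ne_zero : ‖matVec B⁻¹ x‖ ≠ 0 :=
    norm_ne_zero_iff.mpr (matVec_ne_zero (isUnit_nonsing_inv_det B hB) hx)
  rw [sqrt_quadForm_rotCW_normalize det_pos, ← hBA, ← norm_matVec_inv]
  field_simp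

end Plane

theorem anisotropic_neumann_integral_transform_2d_general
    (A B : Matrix (Fin 2) (Fin 2) ℝ) (hB : IsUnit B.det) (hBA : B * Bᵀ = A)
    (v w : EuclideanSpace ℝ (Fin 2)) (hvw : v ≠ w)
    (n : EuclideanSpace ℝ (Fin 2)) (hn : n = rotCW (‖w - v‖⁻¹ • (w - v)))
    (η : EuclideanSpace ℝ (Fin 2)) :
    (‖w - v‖ / √A.det) * ∫ t in (0 : ℝ)..1, log √(quadForm A⁻¹ (v + t • (w - v) - η)) =
      (‖matVec B⁻¹ (w - v)‖ / √(quadForm A n)) *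
        ∫ t in (0 : ℝ)..1, log ‖matVec B⁻¹ (v + t • (w - v) - η)‖ := by
  rw [hn, norm_matVec_inv_div_sqrt_quadForm_rotCW hB hBA (sub_ne_zero.mpr hvw.symm)]
  simp only [norm_matVec_inv, hBA]

/-- Let `A` be symmetric positive definite with symmetric positive definite
square root `B = A^{1/2}` (so `A^{-1/2} = B⁻¹`). For a segment `γ(t) = v + t(w−v)` with unit
normal `n` (clockwise rotation of the unit tangent) and `η` off the closed segment, the
anisotropic Neumann boundary integral equals `1/√(nᵀAn)` times the isotropic integral over the
`A^{-1/2}`-transformed segment: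
`(‖w−v‖/√(det A)) ∫₀¹ log √((γ(t)−η)ᵀ A⁻¹ (γ(t)−η)) dt
  = (‖A^{-1/2}(w−v)‖/√(nᵀ A n)) ∫₀¹ log ‖A^{-1/2}(γ(t)−η)‖ dt`. -/
theorem anisotropic_neumann_integral_transform_2d
    (A B : Matrix (Fin 2) (Fin 2) ℝ)
    (hA : A.PosDef) (hAsymm : A.IsSymm)
    (hB : B.PosDef) (hBsymm : B.IsSymm) (hBA : B * B = A)
    (v w : EuclideanSpace ℝ (Fin 2)) (hvw : v ≠ w)
    (n : EuclideanSpace ℝ (Fin 2)) (hn : n = rotCW (‖w - v‖⁻¹ • (w - v)))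
    (η : EuclideanSpace ℝ (Fin 2))
    (hη : η ∉ (fun t : ℝ => v + t • (w - v)) '' Set.Icc (0 : ℝ) 1) :
    (‖w - v‖ / Real.sqrt A.det) *
      ∫ t in (0:ℝ)..1, Real.log (Real.sqrt (quadForm A⁻¹ (v + t • (w - v) - η))) =
    (‖matVec B⁻¹ (w - v)‖ / Real.sqrt (quadForm A n)) *
      ∫ t in (0:ℝ)..1, Real.log ‖matVec B⁻¹ (v + t • (w - v) - η)‖ := by
  exact anisotropic_neumann_integral_transform_2d_general A B hB.det_pos.ne'.isUnit
    (hBsymm.eq.symm ▸ hBA) v w hvw n hn η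
end
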